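/- Let A be a Banach algebra with a bounded approximate identity such that A ⊗̂ A is amenable. Then A is amenable. -/

import Mathlib

open Filter Topology MulOpposite

/-- A Banach `A`-bimodule structure on the Banach space `X`:
`L a x = a • x` (left action), `R a x = x • a` (right action),
given as continuous bilinear maps. -/
structure BanachBimodule (A X : Type*) [NonUnitalNormedRing A] [NormedSpace ℂ A]
    [NormedAddCommGroup X] [NormedSpace ℂ X] where
  L : A →L[ℂ] X →L[ℂ] X
  R : A →L[ℂ] X →L[ℂ] X
  L_mul : ∀ a b : A, L (a * b) = (L a).comp (L b)
  R_mul : ∀ a b : A, R (a * b) = (R b).comp (R a)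
  LR_comm : ∀ (a b : A) (x : X), R b (L a x) = L a (R b x)

/-- `D : A → X*` is a derivation into the dual Banach bimodule of `X`, written
pointwise: `D(ab) = a·D(b) + D(a)·b` where `(a·f)(x) = f(x·a)`, `(f·a)(x) = f(a·x)`. -/
def IsDualDerivation {A X : Type*} [NonUnitalNormedRing A] [NormedSpace ℂ A]
    [NormedAddCommGroup X] [NormedSpace ℂ X] (σ : BanachBimodule A X)
    (D : A →L[ℂ] (X →L[ℂ] ℂ)) : Prop :=
  ∀ (a b : A) (x : X), D (a * b) x = D b (σ.R a x) + D a (σ.L b x)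

/-- `D` is inner: `D a = a·f − f·a` for some `f ∈ X*`. -/
def IsInnerDualDerivation {A X : Type*} [NonUnitalNormedRing A] [NormedSpace ℂ A]
    [NormedAddCommGroup X] [NormedSpace ℂ X] (σ : BanachBimodule A X)
    (D : A →L[ℂ] (X →L[ℂ] ℂ)) : Prop :=
  ∃ f : X →L[ℂ] ℂ, ∀ (a : A) (x : X), D a x = f (σ.R a x) - f (σ.L a x)

/-- A Banach algebra is amenable if every continuous derivation into every dual
Banach bimodule is inner. -/
def Amenable (A : Type*) [NonUnitalNormedRing A] [NormedSpace ℂ A] : Prop :=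
  ∀ (X : Type) (_ : NormedAddCommGroup X) (_ : NormedSpace ℂ X) (_ : CompleteSpace X)
    (σ : BanachBimodule A X) (D : A →L[ℂ] (X →L[ℂ] ℂ)),
    IsDualDerivation σ D → IsInnerDualDerivation σ D

/-- Weak amenability: every continuous derivation `D : A → A*` into the dual
bimodule (`(a·f)(x) = f(xa)`, `(f·a)(x) = f(ax)`) is inner. -/
def WeaklyAmenable (A : Type*) [NonUnitalNormedRing A] [NormedSpace ℂ A] : Prop :=
  ∀ D : A →L[ℂ] (A →L[ℂ] ℂ),
    (∀ a b x : A, D (a * b) x = D b (x * a) + D a (b * x)) →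
    ∃ f : A →L[ℂ] ℂ, ∀ a x : A, D a x = f (x * a) - f (a * x)

/-- A bounded net in a normed space. -/
structure BddNet (X : Type*) [Norm X] where
  ι : Type
  [dir : SemilatticeSup ι]
  [ne : Nonempty ι]
  z : ι → X
  C : ℝ
  bdd : ∀ i, ‖z i‖ ≤ C

/-- The `atTop` filter of the (directed) index of a bounded net. -/
def BddNet.filter {X : Type*} [Norm X] (S : BddNet X) : Filter S.ι :=
  letI := S.dir; Filter.atTop

/-- The bounded net `S` is a two-sided bounded approximate identity for `A`. -/
def IsBAI {A : Type*} [NonUnitalNormedRing A] (S : BddNet A) : Prop :=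
  ∀ a : A, Tendsto (fun i => a * S.z i) S.filter (nhds a) ∧
           Tendsto (fun i => S.z i * a) S.filter (nhds a)

/-- `A` has a (two-sided) bounded approximate identity. -/
def HasBAI (A : Type*) [NonUnitalNormedRing A] : Prop := ∃ S : BddNet A, IsBAI S

/-- `T`, together with the continuous bilinear map `ι`, is (a realization of) the
projective tensor product `A ⊗̂ B` of the Banach algebras `A` and `B`:
`ι` is multiplicative ((a⊗b)(c⊗d) = ac⊗bd), satisfies the cross-norm estimate,
has dense linear span, and has the universal (norm-decreasing lifting) property
of the projective tensor norm. -/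
structure IsProjTensorProduct (A B T : Type*)
    [NonUnitalNormedRing A] [NormedSpace ℂ A] [NonUnitalNormedRing B] [NormedSpace ℂ B]
    [NonUnitalNormedRing T] [NormedSpace ℂ T] [CompleteSpace T] where
  ι : A →L[ℂ] B →L[ℂ] T
  norm_ι : ∀ a b, ‖ι a b‖ ≤ ‖a‖ * ‖b‖
  ι_mul : ∀ (a c : A) (b d : B), ι a b * ι c d = ι (a * c) (b * d)
  dense_span : Dense (Submodule.span ℂ (Set.range fun p : A × B => ι p.1 p.2) : Set T)
  lift : ∀ (E : Type) (_ : NormedAddCommGroup E) (_ : NormedSpace ℂ E) (_ : CompleteSpace E)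
    (φ : A →L[ℂ] B →L[ℂ] E), ∃ Φ : T →L[ℂ] E, (∀ a b, Φ (ι a b) = φ a b) ∧ ‖Φ‖ ≤ ‖φ‖


open ContinuousLinearMap in
/-- `p ↦ q ↦ (S ↦ q ∘ S ∘ p)`. -/
noncomputable def sandw (E N : Type) [NormedAddCommGroup E] [NormedSpace ℂ E]
    [NormedAddCommGroup N] [NormedSpace ℂ N] :
    (E →L[ℂ] E) →L[ℂ] (N →L[ℂ] N) →L[ℂ] ((E →L[ℂ] N) →L[ℂ] (E →L[ℂ] N)) :=
  LinearMap.mkContinuous₂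
    (LinearMap.mk₂ ℂ (fun (p : E →L[ℂ] E) (q : N →L[ℂ] N) =>
      (compL ℂ E N N q).comp ((compL ℂ E E N).flip p))
      (fun p p' q => by ext; simp) (fun c p q => by ext; simp)
      (fun p q q' => by ext; simp) (fun c p q => by ext; simp)) 1
    (fun p q => by
      refine opNorm_le_bound _ (by positivity) fun S => ?_
      change ‖q.comp (S.comp p)‖ ≤ _
      calc ‖q.comp (S.comp p)‖ ≤ ‖q‖ * (‖S‖ * ‖p‖) :=
            (opNorm_comp_le _ _).trans (by gcongr; exact opNorm_comp_le _ _)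
        _ = 1 * ‖p‖ * ‖q‖ * ‖S‖ := by ring)

theorem sandw_apply (E N : Type) [NormedAddCommGroup E] [NormedSpace ℂ E]
    [NormedAddCommGroup N] [NormedSpace ℂ N] (p : E →L[ℂ] E) (q : N →L[ℂ] N)
    (S : E →L[ℂ] N) (x : E) : sandw E N p q S x = q (S (p x)) := rfl

theorem proj_ext {A T E : Type*} [NonUnitalNormedRing A] [NormedSpace ℂ A]
    [NonUnitalNormedRing T] [NormedSpace ℂ T] [CompleteSpace T]
    [NormedAddCommGroup E] [NormedSpace ℂ E]
    (P : IsProjTensorProduct A A T) (f g : T →L[ℂ] E)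
    (h : ∀ a b, f (P.ι a b) = g (P.ι a b)) : f = g := by
  refine ContinuousLinearMap.ext_on P.dense_span ?_
  rintro _ ⟨p, rfl⟩
  exact h p.1 p.2

theorem proj_ext₂ {A T E : Type*} [NonUnitalNormedRing A] [NormedSpace ℂ A]
    [NonUnitalNormedRing T] [NormedSpace ℂ T] [CompleteSpace T]
    [NormedAddCommGroup E] [NormedSpace ℂ E]
    (P : IsProjTensorProduct A A T) (f g : T →L[ℂ] T →L[ℂ] E)
    (h : ∀ a b c d, f (P.ι a b) (P.ι c d) = g (P.ι a b) (P.ι c d)) : f = g :=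
  proj_ext P f g fun a b => proj_ext P _ _ fun c d => h a b c d

/-- Dual space. -/
abbrev Du (X : Type) [NormedAddCommGroup X] [NormedSpace ℂ X] : Type := X →L[ℂ] ℂ

/-- The auxiliary bimodule. -/
abbrev Yd (X B : Type) [NormedAddCommGroup X] [NormedSpace ℂ X]
    [NormedAddCommGroup B] [NormedSpace ℂ B] : Type := Du X →L[ℂ] Du B

set_option maxSynthPendingDepth 5 in
set_option synthInstance.maxHeartbeats 400000 in
set_option maxHeartbeats 2000000 in
open ContinuousLinearMap in
theorem core {A T : Type*} [NonUnitalNormedRing A] [NormedSpace ℂ A]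
    [IsScalarTower ℂ A A] [SMulCommClass ℂ A A]
    [NonUnitalNormedRing T] [NormedSpace ℂ T]
    [IsScalarTower ℂ T T] [SMulCommClass ℂ T T] [CompleteSpace T]
    (P : IsProjTensorProduct A A T) (S : BddNet A) (hS : IsBAI S) (hT : Amenable T)
    (X : Type) [NormedAddCommGroup X] [NormedSpace ℂ X]
    (σ : BanachBimodule A X) (D : A →L[ℂ] (X →L[ℂ] ℂ)) (hD : IsDualDerivation σ D)
    (B : Type) [NormedRing B] [NormedAlgebra ℂ B] (π : A →L[ℂ] B)
    (hπ : ∀ a b, π (a * b) = π a * π b) (hne : ∃ a, π a ≠ 0) :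
    IsInnerDualDerivation σ D := by
  let _ := S.dir
  have := S.ne
  have hNB : S.filter.NeBot := by unfold BddNet.filter; infer_instance
  -- the four elementary actions
  let pL : A →L[ℂ] ((X →L[ℂ] ℂ) →L[ℂ] (X →L[ℂ] ℂ)) := (compL ℂ X X ℂ).flip.comp σ.L
  let pR : A →L[ℂ] ((X →L[ℂ] ℂ) →L[ℂ] (X →L[ℂ] ℂ)) := (compL ℂ X X ℂ).flip.comp σ.R
  let qL : A →L[ℂ] ((B →L[ℂ] ℂ) →L[ℂ] (B →L[ℂ] ℂ)) :=
    (compL ℂ B B ℂ).flip.comp ((mul ℂ B).flip.comp π)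
  let qR : A →L[ℂ] ((B →L[ℂ] ℂ) →L[ℂ] (B →L[ℂ] ℂ)) :=
    (compL ℂ B B ℂ).flip.comp ((mul ℂ B).comp π)
  have epL : ∀ a ξ x, pL a ξ x = ξ (σ.L a x) := fun _ _ _ => rfl
  have epR : ∀ a ξ x, pR a ξ x = ξ (σ.R a x) := fun _ _ _ => rfl
  have eqL : ∀ a n w, qL a n w = n (w * π a) := fun _ _ _ => rfl
  have eqR : ∀ a n w, qR a n w = n (π a * w) := fun _ _ _ => rfl
  let φL : A →L[ℂ] A →L[ℂ] ((Yd X B) →L[ℂ] (Yd X B)) := (sandw (Du X) (Du B)).bilinearComp pL qL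
  let φR : A →L[ℂ] A →L[ℂ] ((Yd X B) →L[ℂ] (Yd X B)) := (sandw (Du X) (Du B)).bilinearComp pR qR
  have eφL : ∀ a b (y : (Yd X B)) ξ w, φL a b y ξ w = y (pL a ξ) (w * π b) := fun _ _ _ _ _ => rfl
  have eφR : ∀ a b (y : (Yd X B)) ξ w, φR a b y ξ w = y (pR a ξ) (π b * w) := fun _ _ _ _ _ => rfl
  let evE : (Du X) →L[ℂ] ((Yd X B) →L[ℂ] (Du B)) := (ContinuousLinearMap.id ℂ (Yd X B)).flip
  let evB : B →L[ℂ] ((Du B) →L[ℂ] ℂ) := (ContinuousLinearMap.id ℂ (Du B)).flip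
  let φD : A →L[ℂ] A →L[ℂ] ((Yd X B) →L[ℂ] ℂ) :=
    ((compL ℂ (Yd X B) (Du B) ℂ).bilinearComp (evB.comp π) (evE.comp D)).flip
  have eφD : ∀ a b (y : (Yd X B)), φD a b y = y (D a) (π b) := fun _ _ _ => rfl
  obtain ⟨TL, hTL, -⟩ := P.lift ((Yd X B) →L[ℂ] (Yd X B)) inferInstance inferInstance inferInstance φL
  obtain ⟨TR, hTR, -⟩ := P.lift ((Yd X B) →L[ℂ] (Yd X B)) inferInstance inferInstance inferInstance φR
  obtain ⟨TD, hTD, -⟩ := P.lift ((Yd X B) →L[ℂ] ℂ) inferInstance inferInstance inferInstance φD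
  let τ : BanachBimodule T (Yd X B) :=
    { L := TL
      R := TR
      L_mul := by
        have := proj_ext₂ P ((compL ℂ T T ((Yd X B) →L[ℂ] (Yd X B)) TL).comp (mul ℂ T))
          ((compL ℂ (Yd X B) (Yd X B) (Yd X B)).bilinearComp TL TL) (fun a b c d => by
            change TL (P.ι a b * P.ι c d) = (TL (P.ι a b)).comp (TL (P.ι c d))
            rw [P.ι_mul, hTL, hTL, hTL]
            ext y ξ w
            rw [comp_apply, eφL, eφL, eφL, hπ, mul_assoc]
            congr 2
            ext x
            simp only [epL, σ.L_mul, comp_apply])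
        exact fun s t => congrArg (fun f => f s t) this
      R_mul := by
        have := proj_ext₂ P ((compL ℂ T T ((Yd X B) →L[ℂ] (Yd X B)) TR).comp (mul ℂ T))
          ((compL ℂ (Yd X B) (Yd X B) (Yd X B)).bilinearComp TR TR).flip (fun a b c d => by
            change TR (P.ι a b * P.ι c d) = (TR (P.ι c d)).comp (TR (P.ι a b))
            rw [P.ι_mul, hTR, hTR, hTR]
            ext y ξ w
            rw [comp_apply, eφR, eφR, eφR, hπ, mul_assoc]
            congr 2
            ext x
            simp only [epR, σ.R_mul, comp_apply])
        exact fun s t => congrArg (fun f => f s t) this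
      LR_comm := by
        have := proj_ext₂ P ((compL ℂ (Yd X B) (Yd X B) (Yd X B)).bilinearComp TR TL).flip
          ((compL ℂ (Yd X B) (Yd X B) (Yd X B)).bilinearComp TL TR) (fun a b c d => by
            change (TR (P.ι c d)).comp (TL (P.ι a b)) = (TL (P.ι a b)).comp (TR (P.ι c d))
            rw [hTR, hTL]
            ext y ξ w
            rw [comp_apply, comp_apply, eφR, eφL, eφL, eφR, mul_assoc]
            congr 2
            ext x
            simp only [epR, epL, σ.LR_comm])
        exact fun s t y => congrArg (fun f => f s t y) this }
  have hτ : IsDualDerivation τ TD := by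
    have := proj_ext₂ P ((compL ℂ T T ((Yd X B) →L[ℂ] ℂ) TD).comp (mul ℂ T))
      (((compL ℂ (Yd X B) (Yd X B) ℂ).bilinearComp TD TR).flip + (compL ℂ (Yd X B) (Yd X B) ℂ).bilinearComp TD TL)
      (fun a b c d => by
        change TD (P.ι a b * P.ι c d) = (TD (P.ι c d)).comp (TR (P.ι a b))
          + (TD (P.ι a b)).comp (TL (P.ι c d))
        rw [P.ι_mul, hTD, hTD, hTD, hTR, hTL]
        ext y
        rw [add_apply, comp_apply, comp_apply, eφD, eφD, eφD, eφR, eφL, hπ, ← add_apply,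
          ← map_add]
        congr 2
        ext x
        rw [add_apply, epR, epL]
        exact hD a c x)
    exact fun s t y => congrArg (fun f => f s t y) this
  obtain ⟨F, hF⟩ := hT (Yd X B) inferInstance inferInstance inferInstance τ TD hτ
  -- choose `u`, `v`, `ψ`
  obtain ⟨u, v, huv⟩ : ∃ u v, π (u * v) ≠ 0 := by
    obtain ⟨a, ha⟩ := hne
    by_contra! h
    have h1 : Tendsto (fun i => π (a * S.z i)) S.filter (nhds (π a)) :=
      (π.continuous.tendsto a).comp (hS a).1
    simp only [h] at h1
    exact ha (tendsto_nhds_unique tendsto_const_nhds h1).symm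
  obtain ⟨ψ, -, hψ⟩ := exists_dual_vector ℂ (π (u * v)) (norm_ne_zero_iff.mpr huv)
  have hψ0 : ψ (π (u * v)) ≠ 0 := by
    rw [hψ]; simpa using huv
  -- `φ c d w = ψ (π c * w * π d)`
  let φ : A →L[ℂ] A →L[ℂ] (Du B) :=
    (((compL ℂ B B ℂ).comp ((compL ℂ B B ℂ ψ).comp ((mul ℂ B).flip.comp π))).bilinearComp
      (ContinuousLinearMap.id ℂ A) ((mul ℂ B).comp π)).flip
  have eφ : ∀ c d w, φ c d w = ψ (π c * w * π d) := fun _ _ _ => rfl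
  -- `ten x n ξ w = ξ x * n w`
  let ten : X →L[ℂ] (Du B) →L[ℂ] (Yd X B) :=
    ((smulRightL ℂ (Du X) (Du B)).comp (ContinuousLinearMap.id ℂ (Du X)).flip)
  have eten : ∀ x n ξ w, ten x n ξ w = ξ x * n w := fun _ _ _ _ => rfl
  have key : ∀ a b x, D a x * ψ (π (u * b * v)) =
      F (ten (σ.R a x) (φ (u * b) v)) - F (ten (σ.L a x) (φ u (b * v))) := by
    intro a b x
    have h := hF (P.ι a b) (ten x (φ u v))
    have h1 : τ.R (P.ι a b) (ten x (φ u v)) = ten (σ.R a x) (φ (u * b) v) := by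
      change TR (P.ι a b) (ten x (φ u v)) = _
      rw [hTR]
      ext ξ w
      rw [eφR, eten, eten, epR, eφ, eφ, hπ]
      simp only [mul_assoc]
    have h2 : τ.L (P.ι a b) (ten x (φ u v)) = ten (σ.L a x) (φ u (b * v)) := by
      change TL (P.ι a b) (ten x (φ u v)) = _
      rw [hTL]
      ext ξ w
      rw [eφL, eten, eten, epL, eφ, eφ, hπ]
      simp only [mul_assoc]
    rw [h1, h2, hTD, eφD, eten, eφ] at h
    rw [← h, hπ, hπ]
  have lim : ∀ a x, D a x * ψ (π (u * v)) =
      F (ten (σ.R a x) (φ u v)) - F (ten (σ.L a x) (φ u v)) := by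
    intro a x
    have c1 : Continuous fun b : A => D a x * ψ (π (b * v)) := by fun_prop
    have c2 : Continuous fun b : A => F (ten (σ.R a x) (φ b v)) := by fun_prop
    have c3 : Continuous fun b : A => F (ten (σ.L a x) (φ u b)) := by fun_prop
    have t1 := (c1.tendsto u).comp (hS u).1
    have t2 := (c2.tendsto u).comp (hS u).1
    have t3 := (c3.tendsto v).comp (hS v).2
    refine tendsto_nhds_unique t1 ((t2.sub t3).congr fun i => ?_)
    exact (key a (S.z i) x).symm
  refine ⟨(ψ (π (u * v)))⁻¹ • F.comp (ten.flip (φ u v)), fun a x => ?_⟩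
  simp only [smul_apply, comp_apply, flip_apply, smul_eq_mul]
  rw [← mul_sub, ← lim a x]
  field_simp

/-- if `A` has a bounded approximate identity and `A ⊗̂ A` is amenable,
then `A` is amenable. -/
theorem stmt8 {A T : Type*} [NonUnitalNormedRing A] [NormedSpace ℂ A] [IsScalarTower ℂ A A] [SMulCommClass ℂ A A] [CompleteSpace A] [NonUnitalNormedRing T] [NormedSpace ℂ T] [IsScalarTower ℂ T T] [SMulCommClass ℂ T T] [CompleteSpace T]
    (P : IsProjTensorProduct A A T)
    (hA : HasBAI A) (hT : Amenable T) : Amenable A := by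
  intro X _ _ _ σ D hD
  obtain ⟨S, hS⟩ := hA
  by_cases hL : ∃ a, σ.L a ≠ 0
  · exact core P S hS hT X σ D hD (X →L[ℂ] X) σ.L σ.L_mul hL
  by_cases hR : ∃ a, σ.R a ≠ 0
  · refine core P S hS hT X σ D hD (X →L[ℂ] X)ᵐᵒᵖ
      ((opContinuousLinearEquiv ℂ : (X →L[ℂ] X) ≃L[ℂ] (X →L[ℂ] X)ᵐᵒᵖ).toContinuousLinearMap.comp
        σ.R) (fun a b => ?_) ?_
    · exact congrArg op (σ.R_mul a b)
    · obtain ⟨a, ha⟩ := hR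
      exact ⟨a, fun h => ha (op_injective h)⟩
  push Not at hL hR
  let _ := S.dir
  have := S.ne
  have hNB : S.filter.NeBot := by unfold BddNet.filter; infer_instance
  refine ⟨0, fun a x => ?_⟩
  have h0 : ∀ b, D (a * b) = 0 := fun b => by
    ext y
    rw [hD a b y, hL, hR]
    simp
  have h1 : Tendsto (fun i => D (a * S.z i)) S.filter (nhds (D a)) :=
    (D.continuous.tendsto a).comp (hS a).1
  simp only [h0] at h1
  rw [← tendsto_nhds_unique tendsto_const_nhds h1]
  simp
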